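/- Let d ≥ 1 be an integer and let {x_u : u ∈ {0,1}^{d−1}} and {y_w : w ∈ {0,1,2}^{d−1}} be families of non-negative real numbers such that y_{u+v} ≥ x_u + x_v for all u, v ∈ {0,1}^{d−1}, and such that x_u ≥ x_v whenever v_i ≥ u_i for all i. Then Σ_{w ∈ {0,1,2}^{d−1}} y_w ≥ 2·(3/2)^{d−1} · Σ_{u ∈ {0,1}^{d−1}} x_u. -/

import Mathlib

/-!
The inequality follows by averaging: for each `w ∈ {0,1,2}^k` the number `y_w` dominates
`x_u + x_v` for *every* decomposition `w = u + v` with `u, v ∈ {0,1}^k`, hence also the uniform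
average of these sums. If `w` has `m` coordinates equal to `1` there are `2^m` decompositions, so
the average is `∑ u, 2 * wt u w * x u` with `wt u w` a product over the coordinates
(`two_mul_sum_wt_le`). Summing over `w`, the total coefficient of `x_u` factors over coordinates
as `2 * (1 + 1/2)^k`, which is the claimed constant (`sum_wt_right`).
-/

/-- The set `{0,1,…,n-1}^k` as a finset of functions `Fin k → ℕ`. -/
def cube (k n : ℕ) : Finset (Fin k → ℕ) :=
  Fintype.piFinset fun _ => Finset.range n

/-- One-coordinate weight: the probability that the first summand is `a` when `b ∈ {0,1,2}` is
split uniformly at random as a sum of two elements of `{0,1}`. -/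
noncomputable def wtCoord (a b : ℕ) : ℝ :=
  if b = 1 then 1 / 2 else if b = 2 * a then 1 else 0

/-- The probability that the first summand is `u` when `w ∈ {0,1,2}^k` is split uniformly at
random as a sum of two elements of `{0,1}^k`. -/
noncomputable def wt {k : ℕ} (u w : Fin k → ℕ) : ℝ := ∏ i, wtCoord (u i) (w i)

/-- For `w = u + v` with `u, v ∈ {0,1}^k` this is the other summand `v`. Defining it by flipping
the coordinates where `w i = 1`, instead of by `w - u`, makes it an involution of the whole cube
`{0,1}^k`. -/
def flipOn {k : ℕ} (w u : Fin k → ℕ) : Fin k → ℕ := fun i => if w i = 1 then 1 - u i else u i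

lemma mem_cube {k n : ℕ} {u : Fin k → ℕ} : u ∈ cube k n ↔ ∀ i, u i < n := by
  simp [cube]

lemma wt_nonneg {k : ℕ} (u w : Fin k → ℕ) : 0 ≤ wt u w := by
  refine Finset.prod_nonneg fun i _ => ?_
  unfold wtCoord
  split_ifs <;> norm_num

lemma wt_flipOn {k : ℕ} (u w : Fin k → ℕ) : wt (flipOn w u) w = wt u w := by
  refine Finset.prod_congr rfl fun i _ => ?_
  unfold wtCoord flipOn
  split_ifs <;> simp_all

lemma flipOn_mem {k : ℕ} (w : Fin k → ℕ) {u : Fin k → ℕ} (hu : u ∈ cube k 2) :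
    flipOn w u ∈ cube k 2 := by
  rw [mem_cube] at *
  intro i
  have := hu i
  unfold flipOn
  split_ifs <;> omega

lemma flipOn_flipOn {k : ℕ} (w : Fin k → ℕ) {u : Fin k → ℕ} (hu : u ∈ cube k 2) :
    flipOn w (flipOn w u) = u := by
  rw [mem_cube] at hu
  funext i
  have := hu i
  unfold flipOn
  split_ifs <;> omega

lemma add_flipOn {k : ℕ} {w u : Fin k → ℕ} (hu : u ∈ cube k 2) (h : wt u w ≠ 0) :
    u + flipOn w u = w := by
  rw [mem_cube] at hu
  funext i
  have h1 := hu i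
  have h2 : wtCoord (u i) (w i) ≠ 0 := Finset.prod_ne_zero_iff.mp h i (Finset.mem_univ i)
  simp only [Pi.add_apply, flipOn]
  unfold wtCoord at h2
  split_ifs at h2 ⊢ <;> first | omega | exact absurd rfl h2

/-- The weights of the decompositions of a fixed `w` form a probability distribution. -/
lemma sum_wt_left {k : ℕ} {w : Fin k → ℕ} (hw : w ∈ cube k 3) :
    ∑ u ∈ cube k 2, wt u w = 1 := by
  rw [mem_cube] at hw
  unfold wt cube
  rw [← Finset.prod_univ_sum (fun _ => Finset.range 2) (fun i a => wtCoord a (w i))]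
  refine Finset.prod_eq_one fun i _ => ?_
  have := hw i
  interval_cases w i <;> norm_num [Finset.sum_range_succ, wtCoord]

/-- Each coordinate `a ∈ {0,1}` contributes weight `1` from `b = 2 * a` and `1 / 2` from
`b = 1`. -/
lemma sum_wt_right {k : ℕ} {u : Fin k → ℕ} (hu : u ∈ cube k 2) :
    ∑ w ∈ cube k 3, wt u w = (3 / 2) ^ k := by
  rw [mem_cube] at hu
  unfold wt cube
  rw [← Finset.prod_univ_sum (fun _ => Finset.range 3) (fun i b => wtCoord (u i) b)]
  rw [Finset.prod_congr rfl (g := fun _ => (3 / 2 : ℝ)), Finset.prod_const, Finset.card_univ,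
    Fintype.card_fin]
  intro i _
  have := hu i
  interval_cases u i <;> norm_num [Finset.sum_range_succ, wtCoord]

/-- The average of `x u + x v` over all decompositions `w = u + v` is at most `y w`. -/
lemma two_mul_sum_wt_le {k : ℕ} {x y : (Fin k → ℕ) → ℝ}
    (hadd : ∀ u v : Fin k → ℕ, (∀ i, u i ≤ 1) → (∀ i, v i ≤ 1) → x u + x v ≤ y (u + v))
    {w : Fin k → ℕ} (hw : w ∈ cube k 3) :
    2 * ∑ u ∈ cube k 2, wt u w * x u ≤ y w := by
  have hsymm : ∑ u ∈ cube k 2, wt u w * x u = ∑ u ∈ cube k 2, wt u w * x (flipOn w u) :=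
    Finset.sum_nbij' (flipOn w) (flipOn w) (fun _ h => flipOn_mem w h) (fun _ h => flipOn_mem w h)
      (fun _ h => flipOn_flipOn w h) (fun _ h => flipOn_flipOn w h)
      (fun u h => by rw [wt_flipOn, flipOn_flipOn w h])
  calc 2 * ∑ u ∈ cube k 2, wt u w * x u
      = ∑ u ∈ cube k 2, wt u w * (x u + x (flipOn w u)) := by
        simp only [mul_add, Finset.sum_add_distrib, ← hsymm]
        ring
    _ ≤ ∑ u ∈ cube k 2, wt u w * y w := by
        refine Finset.sum_le_sum fun u hu => ?_
        by_cases h : wt u w = 0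
        · simp [h]
        · refine mul_le_mul_of_nonneg_left ?_ (wt_nonneg u w)
          have hle := hadd u (flipOn w u) (fun i => Nat.le_of_lt_succ (mem_cube.mp hu i))
            (fun i => Nat.le_of_lt_succ (mem_cube.mp (flipOn_mem w hu) i))
          rwa [add_flipOn hu h] at hle
    _ = y w := by rw [← Finset.sum_mul, sum_wt_left hw, one_mul]

/-- The case `k = d - 1` of the main analytic inequality:
`∑_{w ∈ {0,1,2}^{d-1}} y_w ≥ 2 (3/2)^{d-1} ∑_{u ∈ {0,1}^{d-1}} x_u`. -/
theorem stmt17 (d : ℕ) (hd : 1 ≤ d)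
    (x y : (Fin (d - 1) → ℕ) → ℝ)
    (hx : ∀ u, (∀ i, u i ≤ 1) → 0 ≤ x u)
    (hy : ∀ w, (∀ i, w i ≤ 2) → 0 ≤ y w)
    (hadd : ∀ u v : Fin (d - 1) → ℕ, (∀ i, u i ≤ 1) → (∀ i, v i ≤ 1) →
      x u + x v ≤ y (u + v))
    (hmono : ∀ u v : Fin (d - 1) → ℕ, (∀ i, u i ≤ 1) → (∀ i, v i ≤ 1) →
      (∀ i, u i ≤ v i) → x v ≤ x u) :
    ∑ w ∈ cube (d - 1) 3, y w ≥ 2 * (3 / 2) ^ (d - 1) * ∑ u ∈ cube (d - 1) 2, x u := by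
  have key : ∑ w ∈ cube (d - 1) 3, 2 * ∑ u ∈ cube (d - 1) 2, wt u w * x u
      = 2 * (3 / 2) ^ (d - 1) * ∑ u ∈ cube (d - 1) 2, x u := by
    rw [← Finset.mul_sum, Finset.sum_comm, mul_assoc, Finset.mul_sum (cube (d - 1) 2) x]
    congr 1
    refine Finset.sum_congr rfl fun u hu => ?_
    rw [← Finset.sum_mul, sum_wt_right hu]
  rw [ge_iff_le, ← key]
  exact Finset.sum_le_sum fun w hw => two_mul_sum_wt_le hadd hw
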